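/- Let ε′ > 0 and ε = 2ε′². Let K ≥ 1, let w₁, …, w_K be positive reals summing to 1, let μ₁, …, μ_K ∈ ℝ and σ₁, …, σ_K > 0, and set α_k = N(μ_k, σ_k²), μ̄ = Σ_k w_k μ_k, and σ̄ = Σ_k w_k σ_k². Assume ε′² < σ̄ and let S > 0 satisfy Σ_{k=1}^K w_k √(ε′⁴ + 4σ_k² S²) = ε′² + 2S². Then the Gaussian measure N(μ̄, S²) minimizes the functional α ↦ Σ_{k=1}^K w_k OT_ε(α_k, α) over all sub-Gaussian probability measures α on ℝ. -/

import Mathlib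

/-!
Convex duality proves minimality. For each `k` let `C_k > 0` solve `C_k ε'² + C_k² = σ_k² S²`; it is
the covariance of the entropic optimal coupling of `α_k` with `N(μbar, S²)`. The log-density `h_k`
of that bivariate Gaussian relative to the product of its marginals (`logDens`) satisfies
`(x - y)² + ε h_k(x, y) = F_k(x) + G_k(y)` with quadratic potentials (`potF`, `potG`).

The integral of `exp (h_k(·, y))` against `α_k` equals one for *every* real `y`: it is the density
with respect to `α_k` of the conditional law of `x` given `y` (`lintegral_exp_logDens_left`). Hence
`exp h_k` is a probability density with respect to `α_k ⊗ α` for every probability `α`, and Gibbs'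
inequality (`le_OTe`) gives `OT_ε(α_k, α) ≥ ∫ F_k dα_k + ∫ G_k dα` whenever `α` has a second moment.
For `α = N(μbar, S²)` the coupling of density `exp h_k` attains this bound (`OTe_le`).

The leading coefficient of `G_k` is `1 - C_k / S²` and its linear one `-2 (μ_k - μbar)`. The
equation for `S` says that `∑ w_k C_k = S²`, so `∑ w_k G_k` vanishes identically and the weighted
lower bound does not depend on `α`.
-/

open MeasureTheory ProbabilityTheory
open scoped ENNReal Classical

/-- Kullback–Leibler divergence `KL(π ‖ ρ)`, valued in `EReal`:
`∫ log (dπ/dρ) dπ` when `π ≪ ρ` and the log-likelihood ratio is `π`-integrable,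
and `⊤` otherwise. -/
noncomputable def KLdiv {X : Type*} [MeasurableSpace X] (π ρ : Measure X) : EReal :=
  if π ≪ ρ ∧ Integrable (fun x => Real.log (π.rnDeriv ρ x).toReal) π
  then ((∫ x, Real.log (π.rnDeriv ρ x).toReal ∂π : ℝ) : EReal)
  else ⊤

/-- Entropic optimal transport cost on `ℝ` with quadratic cost and product reference
measure: `OT_ε(α, β) = inf { ∫ (x-y)² dπ + ε KL(π ‖ α ⊗ β) }` over couplings `π`
of `α` and `β`. -/
noncomputable def OTe (ε : ℝ) (α β : Measure ℝ) : EReal :=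
  ⨅ (π : Measure (ℝ × ℝ)) (_ : IsProbabilityMeasure π)
    (_ : π.fst = α) (_ : π.snd = β),
    (((∫⁻ p, ENNReal.ofReal ((p.1 - p.2) ^ 2) ∂π : ℝ≥0∞) : EReal)
      + (ε : EReal) * KLdiv π (α.prod β))

/-- Sinkhorn divergence `S_ε(α,β) = OT_ε(α,β) − ½ OT_ε(α,α) − ½ OT_ε(β,β)`. -/
noncomputable def Sdiv (ε : ℝ) (α β : Measure ℝ) : EReal :=
  OTe ε α β - ((1 / 2 : ℝ) : EReal) * OTe ε α α - ((1 / 2 : ℝ) : EReal) * OTe ε β β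

/-- A probability measure on `ℝ` is sub-Gaussian if `∫ exp (x²/q) dα < ∞` for some `q > 0`. -/
def SubGaussian (α : Measure ℝ) : Prop :=
  ∃ q : ℝ, 0 < q ∧ ∫⁻ x, ENNReal.ofReal (Real.exp (x ^ 2 / q)) ∂α < ⊤

/-! ### Duality for a log-density that splits against the cost -/

lemma integral_comp_fst {π : Measure (ℝ × ℝ)} {a : Measure ℝ} (hfst : π.fst = a) {F : ℝ → ℝ}
    (hF : Integrable F a) :
    Integrable (fun p : ℝ × ℝ => F p.1) π ∧ ∫ p, F p.1 ∂π = ∫ x, F x ∂a := by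
  subst hfst
  exact ⟨hF.comp_measurable measurable_fst,
    (integral_map measurable_fst.aemeasurable hF.aestronglyMeasurable).symm⟩

lemma integral_comp_snd {π : Measure (ℝ × ℝ)} {b : Measure ℝ} (hsnd : π.snd = b) {G : ℝ → ℝ}
    (hG : Integrable G b) :
    Integrable (fun p : ℝ × ℝ => G p.2) π ∧ ∫ p, G p.2 ∂π = ∫ y, G y ∂b := by
  subst hsnd
  exact ⟨hG.comp_measurable measurable_snd,
    (integral_map measurable_snd.aemeasurable hG.aestronglyMeasurable).symm⟩

lemma integrable_cost {π : Measure (ℝ × ℝ)} {a b : Measure ℝ} (hfst : π.fst = a)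
    (hsnd : π.snd = b) (ha : Integrable (fun x : ℝ => x ^ 2) a)
    (hb : Integrable (fun x : ℝ => x ^ 2) b) :
    Integrable (fun p : ℝ × ℝ => (p.1 - p.2) ^ 2) π := by
  refine (((integral_comp_fst hfst ha).1.add (integral_comp_snd hsnd hb).1).const_mul 2).mono'
    (by fun_prop) (ae_of_all _ fun p => ?_)
  rw [Real.norm_of_nonneg (sq_nonneg _)]
  simp only [Pi.add_apply]
  nlinarith [sq_nonneg (p.1 + p.2)]

lemma coe_lintegral_cost {π : Measure (ℝ × ℝ)}
    (hc : Integrable (fun p : ℝ × ℝ => (p.1 - p.2) ^ 2) π) :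
    ((∫⁻ p, ENNReal.ofReal ((p.1 - p.2) ^ 2) ∂π : ℝ≥0∞) : EReal)
      = ((∫ p, (p.1 - p.2) ^ 2 ∂π : ℝ) : EReal) := by
  rw [← ofReal_integral_eq_lintegral_ofReal hc (ae_of_all _ fun p => sq_nonneg _),
    EReal.coe_ennreal_ofReal, max_eq_left (integral_nonneg fun p => sq_nonneg _)]

/-- Along a coupling, `h` integrates to a quantity that depends on the coupling only through its
transport cost, because `(x - y)² + ε h(x, y)` splits into functions of `x` and of `y`. -/
lemma integral_of_cost_add {ε : ℝ} (hε : ε ≠ 0) {π : Measure (ℝ × ℝ)} {a b : Measure ℝ}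
    (hfst : π.fst = a) (hsnd : π.snd = b) (ha : Integrable (fun x : ℝ => x ^ 2) a)
    (hb : Integrable (fun x : ℝ => x ^ 2) b) {h : ℝ × ℝ → ℝ} {F G : ℝ → ℝ}
    (hF : Integrable F a) (hG : Integrable G b)
    (heq : ∀ x y, (x - y) ^ 2 + ε * h (x, y) = F x + G y) :
    Integrable h π ∧
      ∫ p, h p ∂π = ε⁻¹ * (∫ x, F x ∂a + ∫ y, G y ∂b - ∫ p, (p.1 - p.2) ^ 2 ∂π) := by
  have hc := integrable_cost hfst hsnd ha hb
  obtain ⟨hF1, hF2⟩ := integral_comp_fst hfst hF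
  obtain ⟨hG1, hG2⟩ := integral_comp_snd hsnd hG
  have hFG : Integrable (fun p : ℝ × ℝ => F p.1 + G p.2) π := hF1.add hG1
  have hhe : h = fun p => ε⁻¹ * (F p.1 + G p.2 - (p.1 - p.2) ^ 2) := by
    ext p
    have := heq p.1 p.2
    rw [← this]; field_simp; simp
  rw [hhe, integral_const_mul, integral_sub hFG hc, integral_add hF1 hG1, hF2, hG2]
  exact ⟨(hFG.sub hc).const_mul _, rfl⟩

/-- Weak duality. The measure with density `exp h` with respect to `a ⊗ b` is a probability, so
Gibbs' inequality gives `∫ h dπ ≤ KL(π ‖ a ⊗ b)` for every coupling `π` of finite divergence. -/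
lemma le_OTe {ε : ℝ} (hε : 0 < ε) {a b : Measure ℝ} [IsProbabilityMeasure a]
    [IsProbabilityMeasure b] (ha : Integrable (fun x : ℝ => x ^ 2) a)
    (hb : Integrable (fun x : ℝ => x ^ 2) b) {h : ℝ × ℝ → ℝ} (hm : Measurable h)
    {F G : ℝ → ℝ} (hF : Integrable F a) (hG : Integrable G b)
    (heq : ∀ x y, (x - y) ^ 2 + ε * h (x, y) = F x + G y)
    (hone : ∫⁻ p, ENNReal.ofReal (Real.exp (h p)) ∂(a.prod b) = 1) :
    ((∫ x, F x ∂a + ∫ y, G y ∂b : ℝ) : EReal) ≤ OTe ε a b := by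
  refine le_iInf fun π => le_iInf fun hπ => le_iInf fun hfst => le_iInf fun hsnd => ?_
  have hc := integrable_cost hfst hsnd ha hb
  rw [coe_lintegral_cost hc, KLdiv]
  split_ifs with hkl
  · obtain ⟨hac, hllr⟩ := hkl
    rw [← EReal.coe_mul, ← EReal.coe_add, EReal.coe_le_coe_iff]
    obtain ⟨hhi, hInt⟩ := integral_of_cost_add hε.ne' hfst hsnd ha hb hF hG heq
    have hei : Integrable (fun p => Real.exp (h p)) (a.prod b) := by
      refine ⟨by fun_prop, ?_⟩
      rw [hasFiniteIntegral_iff_ofReal (ae_of_all _ fun p => (Real.exp_pos _).le), hone]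
      exact ENNReal.one_lt_top
    have hei1 : ∫ p, Real.exp (h p) ∂(a.prod b) = 1 := by
      rw [integral_eq_lintegral_of_nonneg_ae (ae_of_all _ fun p => (Real.exp_pos _).le)
        (by fun_prop), hone, ENNReal.toReal_one]
    have key := integral_llr_tilted_right hac hhi hei hllr
    have : IsProbabilityMeasure ((a.prod b).tilted h) := isProbabilityMeasure_tilted hei
    have hnn := InformationTheory.integral_llr_add_sub_measure_univ_nonneg
      (hac.trans (absolutelyContinuous_tilted hei)) (integrable_llr_tilted_right hac hhi hllr hei)
    rw [key, hei1, Real.log_one, hInt] at hnn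
    simp only [probReal_univ, llr_def] at hnn
    have h2 : ε⁻¹ * (∫ x, F x ∂a + ∫ y, G y ∂b - ∫ p, (p.1 - p.2) ^ 2 ∂π)
        ≤ ∫ p, Real.log (π.rnDeriv (a.prod b) p).toReal ∂π := by linarith
    rw [inv_mul_le_iff₀ hε] at h2
    linarith
  · rw [EReal.coe_mul_top_of_pos hε, EReal.add_top_of_ne_bot (EReal.coe_ne_bot _)]
    exact le_top

/-- Attainment. When both partial integrals of `exp h` equal one, the measure with density `exp h`
with respect to `a ⊗ b` is a coupling whose log-density is `h`. -/
lemma OTe_le {ε : ℝ} (hε : 0 < ε) {a b : Measure ℝ} [IsProbabilityMeasure a]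
    [IsProbabilityMeasure b] (ha : Integrable (fun x : ℝ => x ^ 2) a)
    (hb : Integrable (fun x : ℝ => x ^ 2) b) {h : ℝ × ℝ → ℝ} (hm : Measurable h)
    {F G : ℝ → ℝ} (hF : Integrable F a) (hG : Integrable G b)
    (heq : ∀ x y, (x - y) ^ 2 + ε * h (x, y) = F x + G y)
    (h1 : ∀ y, ∫⁻ x, ENNReal.ofReal (Real.exp (h (x, y))) ∂a = 1)
    (h2 : ∀ x, ∫⁻ y, ENNReal.ofReal (Real.exp (h (x, y))) ∂b = 1) :
    OTe ε a b ≤ ((∫ x, F x ∂a + ∫ y, G y ∂b : ℝ) : EReal) := by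
  have hd : Measurable fun p => ENNReal.ofReal (Real.exp (h p)) := by fun_prop
  set π := (a.prod b).withDensity fun p => ENNReal.ofReal (Real.exp (h p)) with hπ
  have hfst : π.fst = a := by
    ext s hs
    rw [Measure.fst_apply hs, hπ, withDensity_apply _ (measurable_fst hs),
      ← lintegral_indicator (measurable_fst hs),
      lintegral_prod _ (hd.indicator (measurable_fst hs)).aemeasurable]
    have : ∀ x, ∫⁻ y, (Prod.fst ⁻¹' s).indicator (fun p => ENNReal.ofReal (Real.exp (h p))) (x, y) ∂b
        = s.indicator 1 x := by
      intro x
      by_cases hx : x ∈ s <;> simp [Set.indicator, hx, h2]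
    simp_rw [this]
    exact lintegral_indicator_one hs
  have hsnd : π.snd = b := by
    ext s hs
    rw [Measure.snd_apply hs, hπ, withDensity_apply _ (measurable_snd hs),
      ← lintegral_indicator (measurable_snd hs),
      lintegral_prod_symm _ (hd.indicator (measurable_snd hs)).aemeasurable]
    have : ∀ y, ∫⁻ x, (Prod.snd ⁻¹' s).indicator (fun p => ENNReal.ofReal (Real.exp (h p))) (x, y) ∂a
        = s.indicator 1 y := by
      intro y
      by_cases hy : y ∈ s <;> simp [Set.indicator, hy, h1]
    simp_rw [this]
    exact lintegral_indicator_one hs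
  have hprob : IsProbabilityMeasure π := by
    constructor
    rw [← Measure.fst_univ, hfst, measure_univ]
  refine (iInf_le _ π).trans <| (iInf_le _ hprob).trans <| (iInf_le _ hfst).trans <|
    (iInf_le _ hsnd).trans ?_
  have hc := integrable_cost hfst hsnd ha hb
  obtain ⟨hhi, hInt⟩ := integral_of_cost_add hε.ne' hfst hsnd ha hb hF hG heq
  have hac : π ≪ a.prod b := withDensity_absolutelyContinuous _ _
  have hlog : (fun p => Real.log (π.rnDeriv (a.prod b) p).toReal) =ᵐ[π] h := by
    filter_upwards [hac.ae_le (Measure.rnDeriv_withDensity (a.prod b) hd)] with p hp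
    rw [hp, ENNReal.toReal_ofReal (Real.exp_pos _).le, Real.log_exp]
  rw [coe_lintegral_cost hc, KLdiv, if_pos ⟨hac, hhi.congr hlog.symm⟩, integral_congr_ae hlog,
    ← EReal.coe_mul, ← EReal.coe_add, EReal.coe_le_coe_iff, hInt, mul_inv_cancel_left₀ hε.ne']
  linarith

/-! ### The bivariate Gaussian and its potentials -/

/-- The log-density, relative to `N(m, s²) ⊗ N(n, t²)`, of the bivariate Gaussian with these
marginals and covariance `C`, in the case `C e + C² = s² t²`, where the determinant ratio
`1 - C² / (s² t²)` is `e / (e + C)`. -/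
noncomputable def logDens (e m s n t C : ℝ) (p : ℝ × ℝ) : ℝ :=
  -(1 / 2) * Real.log (e / (e + C)) - C / s ^ 2 * (p.1 - m) ^ 2 / (2 * e)
    - C / t ^ 2 * (p.2 - n) ^ 2 / (2 * e) + (p.1 - m) * (p.2 - n) / e

lemma measurable_logDens (e m s n t C : ℝ) : Measurable (logDens e m s n t C) := by
  unfold logDens; fun_prop

/-- Multiplying the density of `N(m, s²)` by the conditional likelihood ratio gives the density of
the conditional law `N(m + (C / t²) (y - n), s² e / (e + C))`. -/
lemma exp_logDens_mul_gaussianPDFReal {e s t C : ℝ} (he : 0 < e) (hs : 0 < s) (ht : 0 < t)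
    (hC : 0 < C) (hCe : C * e + C ^ 2 = s ^ 2 * t ^ 2) (m n x y : ℝ) :
    Real.exp (logDens e m s n t C (x, y)) * gaussianPDFReal m (s ^ 2).toNNReal x
      = gaussianPDFReal (m + C / t ^ 2 * (y - n)) (s ^ 2 * (e / (e + C))).toNNReal x := by
  have hD : 0 < e / (e + C) := by positivity
  rw [gaussianPDFReal, gaussianPDFReal, Real.coe_toNNReal _ (by positivity),
    Real.coe_toNNReal _ (by positivity), ← mul_assoc (2 * Real.pi),
    Real.sqrt_mul (by positivity) (e / (e + C)), mul_inv]
  have h1 : Real.exp (-(1 / 2) * Real.log (e / (e + C))) = (√(e / (e + C)))⁻¹ := by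
    rw [Real.sqrt_eq_rpow, ← Real.rpow_neg hD.le, Real.rpow_def_of_pos hD]
    ring_nf
  have h2 : logDens e m s n t C (x, y) + -(x - m) ^ 2 / (2 * s ^ 2) =
      -(1 / 2) * Real.log (e / (e + C))
        + -(x - (m + C / t ^ 2 * (y - n))) ^ 2 / (2 * (s ^ 2 * (e / (e + C)))) := by
    have h3 : s ^ 2 = (C * e + C ^ 2) / t ^ 2 := by field_simp; linarith
    simp only [logDens]
    rw [h3]
    field_simp
    ring
  calc _ = (√(2 * Real.pi * s ^ 2))⁻¹ *
        Real.exp (logDens e m s n t C (x, y) + -(x - m) ^ 2 / (2 * s ^ 2)) := by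
        rw [Real.exp_add]; ring
    _ = _ := by rw [h2, Real.exp_add, h1]; ring

lemma lintegral_exp_logDens_left {e s t C : ℝ} (he : 0 < e) (hs : 0 < s) (ht : 0 < t)
    (hC : 0 < C) (hCe : C * e + C ^ 2 = s ^ 2 * t ^ 2) (m n y : ℝ) :
    ∫⁻ x, ENNReal.ofReal (Real.exp (logDens e m s n t C (x, y)))
      ∂gaussianReal m (s ^ 2).toNNReal = 1 := by
  have hv : (s ^ 2).toNNReal ≠ 0 := (Real.toNNReal_pos.2 (by positivity)).ne'
  have hv' : (s ^ 2 * (e / (e + C))).toNNReal ≠ 0 := (Real.toNNReal_pos.2 (by positivity)).ne'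
  have := measurable_logDens e m s n t C
  rw [gaussianReal_of_var_ne_zero _ hv,
    lintegral_withDensity_eq_lintegral_mul _ (measurable_gaussianPDF _ _) (by fun_prop),
    ← lintegral_gaussianPDF_eq_one (m + C / t ^ 2 * (y - n)) hv']
  refine lintegral_congr fun x => ?_
  rw [Pi.mul_apply, gaussianPDF, gaussianPDF, ← ENNReal.ofReal_mul (gaussianPDFReal_nonneg _ _ _),
    mul_comm, exp_logDens_mul_gaussianPDFReal he hs ht hC hCe]

lemma lintegral_exp_logDens_right {e s t C : ℝ} (he : 0 < e) (hs : 0 < s) (ht : 0 < t)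
    (hC : 0 < C) (hCe : C * e + C ^ 2 = s ^ 2 * t ^ 2) (m n x : ℝ) :
    ∫⁻ y, ENNReal.ofReal (Real.exp (logDens e m s n t C (x, y)))
      ∂gaussianReal n (t ^ 2).toNNReal = 1 := by
  rw [← lintegral_exp_logDens_left he ht hs hC (by linarith) n m x]
  refine lintegral_congr fun y => ?_
  simp only [logDens]
  ring_nf

/-- The potential on the fixed marginal `N(m, s²)`, for the second marginal centred at `n`. -/
noncomputable def potF (e m s n C : ℝ) (x : ℝ) : ℝ :=
  (1 - C / s ^ 2) * (x - m) ^ 2 + 2 * (m - n) * (x - m) + (m - n) ^ 2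
    - e * Real.log (e / (e + C))

/-- The potential on the free marginal. All its constant terms are put into `potF`. -/
noncomputable def potG (m n t C : ℝ) (y : ℝ) : ℝ :=
  (1 - C / t ^ 2) * (y - n) ^ 2 - 2 * (m - n) * (y - n)

lemma cost_add_logDens {e : ℝ} (he : 0 < e) (m s n t C x y : ℝ) :
    (x - y) ^ 2 + 2 * e * logDens e m s n t C (x, y) = potF e m s n C x + potG m n t C y := by
  simp only [logDens, potF, potG]
  have h (z : ℝ) : 2 * e * (z / (2 * e)) = z := by field_simp
  have h' (z : ℝ) : 2 * e * (z / e) = 2 * z := by field_simp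
  rw [mul_add, mul_sub, mul_sub, h, h, h']
  ring

/-! ### Second moments -/

lemma integrable_id_of_sq {a : Measure ℝ} [IsFiniteMeasure a]
    (ha : Integrable (fun x : ℝ => x ^ 2) a) : Integrable (fun x : ℝ => x) a := by
  refine (ha.add (integrable_const 1)).mono' (by fun_prop) (ae_of_all _ fun x => ?_)
  simp only [Pi.add_apply, Real.norm_eq_abs]
  rw [abs_le]
  constructor <;> nlinarith [sq_nonneg (x - 1), sq_nonneg (x + 1)]

lemma integrable_quadratic {a : Measure ℝ} [IsFiniteMeasure a]
    (ha : Integrable (fun x : ℝ => x ^ 2) a) (A B c d : ℝ) :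
    Integrable (fun x => A * (x - d) ^ 2 + B * (x - d) + c) a := by
  have h1 := integrable_id_of_sq ha
  refine (((ha.const_mul A).add (h1.const_mul (B - 2 * A * d))).add
    (integrable_const (A * d ^ 2 - B * d + c))).congr (ae_of_all _ fun x => ?_)
  simp only [Pi.add_apply]
  ring

lemma integrable_potF {a : Measure ℝ} [IsFiniteMeasure a]
    (ha : Integrable (fun x : ℝ => x ^ 2) a) (e m s n C : ℝ) : Integrable (potF e m s n C) a := by
  refine (integrable_quadratic ha (1 - C / s ^ 2) (2 * (m - n))
    ((m - n) ^ 2 - e * Real.log (e / (e + C))) m).congr (ae_of_all _ fun x => ?_)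
  simp only [potF]; ring

lemma integrable_potG {a : Measure ℝ} [IsFiniteMeasure a]
    (ha : Integrable (fun x : ℝ => x ^ 2) a) (m n t C : ℝ) : Integrable (potG m n t C) a := by
  refine (integrable_quadratic ha (1 - C / t ^ 2) (-(2 * (m - n))) 0 n).congr
    (ae_of_all _ fun x => ?_)
  simp only [potG]; ring

lemma SubGaussian.integrable_sq {a : Measure ℝ} (h : SubGaussian a) :
    Integrable (fun x : ℝ => x ^ 2) a := by
  obtain ⟨q, hq, hlt⟩ := h
  have hi : Integrable (fun x : ℝ => Real.exp (x ^ 2 / q)) a := by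
    refine ⟨by fun_prop, ?_⟩
    rwa [hasFiniteIntegral_iff_ofReal (ae_of_all _ fun p => (Real.exp_pos _).le)]
  refine (hi.const_mul q).mono' (by fun_prop) (ae_of_all _ fun x => ?_)
  rw [Real.norm_of_nonneg (sq_nonneg _)]
  have := Real.add_one_le_exp (x ^ 2 / q)
  rw [← div_le_iff₀' hq]
  linarith

lemma integrable_sq_gaussianReal (m : ℝ) (v : NNReal) :
    Integrable (fun x : ℝ => x ^ 2) (gaussianReal m v) := by
  simpa using (memLp_id_gaussianReal (μ := m) (v := v) 2).integrable_sq

/-! ### Minimality of the Gaussian -/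

lemma sum_coe_ereal {ι : Type*} (s : Finset ι) (f : ι → ℝ) :
    ∑ i ∈ s, ((f i : ℝ) : EReal) = ((∑ i ∈ s, f i : ℝ) : EReal) := by
  induction s using Finset.cons_induction with
  | empty => simp
  | cons i s hi ih => rw [Finset.sum_cons, Finset.sum_cons, ih, EReal.coe_add]

/-- shrinking bias of `OT_ε^⊗`: with `ε = 2ε'²`, Gaussians
`α_k = N(μ_k, σ_k²)`, positive weights summing to 1, `μ̄ = Σ w_k μ_k`,
`σ̄ = Σ w_k σ_k²`, if `ε'² < σ̄` and `S > 0` solves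
`Σ_k w_k √(ε'⁴ + 4σ_k²S²) = ε'² + 2S²`, then `N(μ̄, S²)` minimizes
`α ↦ Σ_k w_k OT_ε(α_k, α)` over sub-Gaussian probability measures. -/
theorem ot_product_gaussian_barycenter
    (ε' ε : ℝ) (hε' : 0 < ε') (hε : ε = 2 * ε' ^ 2)
    (K : ℕ) (hK : 1 ≤ K) (w μ σ : Fin K → ℝ)
    (hw : ∀ k, 0 < w k) (hwsum : ∑ k, w k = 1) (hσ : ∀ k, 0 < σ k)
    (μbar σbar : ℝ) (hμbar : μbar = ∑ k, w k * μ k) (hσbar : σbar = ∑ k, w k * σ k ^ 2)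
    (hsmall : ε' ^ 2 < σbar)
    (S : ℝ) (hS : 0 < S)
    (hfix : ∑ k, w k * Real.sqrt (ε' ^ 4 + 4 * σ k ^ 2 * S ^ 2) = ε' ^ 2 + 2 * S ^ 2) :
    ∀ α : Measure ℝ, IsProbabilityMeasure α → SubGaussian α →
      ∑ k, ((w k : ℝ) : EReal) *
          OTe ε (gaussianReal (μ k) ((σ k ^ 2).toNNReal)) (gaussianReal μbar ((S ^ 2).toNNReal))
        ≤ ∑ k, ((w k : ℝ) : EReal) *
          OTe ε (gaussianReal (μ k) ((σ k ^ 2).toNNReal)) α := by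
  intro α hα hsub
  -- the covariance of the optimal coupling of `α_k` with `N(μbar, S²)`
  set C : Fin K → ℝ := fun k =>
    (Real.sqrt (ε' ^ 4 + 4 * σ k ^ 2 * S ^ 2) - ε' ^ 2) / 2 with hCdef
  have he : 0 < ε' ^ 2 := by positivity
  have hε0 : 0 < ε := by rw [hε]; positivity
  have hC : ∀ k, 0 < C k := by
    intro k
    have hk := hσ k
    have : ε' ^ 2 < Real.sqrt (ε' ^ 4 + 4 * σ k ^ 2 * S ^ 2) := by
      refine Real.lt_sqrt_of_sq_lt ?_
      have : 0 < 4 * σ k ^ 2 * S ^ 2 := by positivity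
      nlinarith
    simp only [hCdef]; linarith
  have hCe : ∀ k, C k * ε' ^ 2 + C k ^ 2 = σ k ^ 2 * S ^ 2 := by
    intro k
    have : Real.sqrt (ε' ^ 4 + 4 * σ k ^ 2 * S ^ 2) ^ 2 = ε' ^ 4 + 4 * σ k ^ 2 * S ^ 2 :=
      Real.sq_sqrt (by positivity)
    simp only [hCdef]; linarith
  have hCsum : ∑ k, w k * C k = S ^ 2 := by
    have : ∑ k, w k * C k = (∑ k, w k * Real.sqrt (ε' ^ 4 + 4 * σ k ^ 2 * S ^ 2)
        - (∑ k, w k) * ε' ^ 2) / 2 := by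
      rw [Finset.sum_mul, ← Finset.sum_sub_distrib, Finset.sum_div]
      refine Finset.sum_congr rfl fun k _ => ?_
      simp only [hCdef]; ring
    rw [this, hfix, hwsum]; ring
  -- optimality: the fixed-point equation makes the weighted potentials cancel pointwise
  have hG : ∀ y, ∑ k, w k * potG (μ k) μbar S (C k) y = 0 := by
    intro y
    have : ∑ k, w k * potG (μ k) μbar S (C k) y
        = ((∑ k, w k) - (∑ k, w k * C k) / S ^ 2) * (y - μbar) ^ 2
          - 2 * ((∑ k, w k * μ k) - (∑ k, w k) * μbar) * (y - μbar) := by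
      simp only [Finset.sum_mul, Finset.sum_div, ← Finset.sum_sub_distrib, Finset.mul_sum]
      refine Finset.sum_congr rfl fun k _ => ?_
      simp only [potG]; ring
    rw [this, hCsum, hwsum, ← hμbar, div_self (by positivity)]; ring
  have hGint : ∀ (b : Measure ℝ) [IsProbabilityMeasure b],
      Integrable (fun x : ℝ => x ^ 2) b →
      ∑ k, w k * ∫ y, potG (μ k) μbar S (C k) y ∂b = 0 := by
    intro b _ hb
    simp_rw [← integral_const_mul]
    rw [← integral_finsetSum _ fun k _ => (integrable_potG hb _ _ _ _).const_mul _]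
    simp [hG]
  have hα2 := hsub.integrable_sq
  have hβ2 := integrable_sq_gaussianReal μbar (S ^ 2).toNNReal
  have hsum : ∀ (b : Measure ℝ) [IsProbabilityMeasure b],
      Integrable (fun x : ℝ => x ^ 2) b →
      ∑ k, ((w k : ℝ) : EReal) *
        ((∫ x, potF (ε' ^ 2) (μ k) (σ k) μbar (C k) x ∂gaussianReal (μ k) (σ k ^ 2).toNNReal
          + ∫ y, potG (μ k) μbar S (C k) y ∂b : ℝ) : EReal)
      = ((∑ k, w k *
          ∫ x, potF (ε' ^ 2) (μ k) (σ k) μbar (C k) x ∂gaussianReal (μ k) (σ k ^ 2).toNNReal :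
            ℝ) : EReal) := by
    intro b _ hb
    simp_rw [← EReal.coe_mul]
    rw [sum_coe_ereal]
    simp_rw [mul_add]
    rw [Finset.sum_add_distrib, hGint b hb, add_zero]
  have heq : ∀ k x y, (x - y) ^ 2 + ε * logDens (ε' ^ 2) (μ k) (σ k) μbar S (C k) (x, y)
      = potF (ε' ^ 2) (μ k) (σ k) μbar (C k) x + potG (μ k) μbar S (C k) y := by
    intro k x y
    rw [hε]; exact cost_add_logDens he _ _ _ _ _ _ _
  calc _ ≤ _ := Finset.sum_le_sum fun k _ => mul_le_mul_of_nonneg_left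
        (OTe_le hε0 (integrable_sq_gaussianReal _ _) hβ2 (measurable_logDens _ _ _ _ _ _)
          (integrable_potF (integrable_sq_gaussianReal _ _) _ _ _ _ _) (integrable_potG hβ2 _ _ _ _)
          (heq k) (lintegral_exp_logDens_left he (hσ k) hS (hC k) (hCe k) _ _)
          (lintegral_exp_logDens_right he (hσ k) hS (hC k) (hCe k) _ _))
        (EReal.coe_nonneg.2 (hw k).le)
    _ = _ := (hsum _ hβ2).trans (hsum α hα2).symm
    _ ≤ _ := Finset.sum_le_sum fun k _ => mul_le_mul_of_nonneg_left
        (le_OTe hε0 (integrable_sq_gaussianReal _ _) hα2 (measurable_logDens _ _ _ _ _ _)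
          (integrable_potF (integrable_sq_gaussianReal _ _) _ _ _ _ _) (integrable_potG hα2 _ _ _ _)
          (heq k) (by
            have := measurable_logDens (ε' ^ 2) (μ k) (σ k) μbar S (C k)
            rw [lintegral_prod_symm _ (by fun_prop)]
            simp_rw [lintegral_exp_logDens_left he (hσ k) hS (hC k) (hCe k) (μ k) μbar]
            simp))
        (EReal.coe_nonneg.2 (hw k).le)
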